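/- For every relational vocabulary ρ and all d, k, ℓ, q ∈ ℕ there exists m ∈ ℕ such that the following holds. Let B be a ρ-structure whose Gaifman graph has maximum degree Δ(B) ≤ d, and let C be the family of all concepts ⟦φ(x̄; v̄)⟧^B ⊆ U(B)^k, where φ(x̄; ȳ) ranges over first-order formulas over ρ of quantifier rank at most q with |x̄| = k and |ȳ| = ℓ, and v̄ ranges over U(B)^ℓ. Then the VC-dimension of C satisfies VC(C) ≤ m; in particular, no subset of U(B)^k of cardinality m+1 is shattered by C. -/

import Mathlib

open FirstOrder FirstOrder.Language

universe w

/-- The quantifier rank of a first-order (bounded) formula: the nesting depth of quantifiers. -/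
def qRank {L : FirstOrder.Language} : ∀ {α : Type*} {n : ℕ}, L.BoundedFormula α n → ℕ
  | _, _, .falsum => 0
  | _, _, .equal _ _ => 0
  | _, _, .rel _ _ => 0
  | _, _, .imp f g => max (qRank f) (qRank g)
  | _, _, .all f => qRank f + 1

/-- Adjacency in the Gaifman graph of a structure: two distinct elements are adjacent iff
they occur together in some tuple of some relation. -/
def gaifmanAdj (L : FirstOrder.Language) (M : Type w) [L.Structure M] (a b : M) : Prop :=
  a ≠ b ∧ ∃ (n : ℕ) (R : L.Relations n) (t : Fin n → M),
    Structure.RelMap R t ∧ (∃ i, t i = a) ∧ (∃ j, t j = b)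

/-- `distLE L M r a b` means the distance between `a` and `b` in the Gaifman graph of `M`
is at most `r`. -/
def distLE (L : FirstOrder.Language) (M : Type w) [L.Structure M] : ℕ → M → M → Prop
  | 0, a, b => a = b
  | r + 1, a, b => a = b ∨ ∃ c, gaifmanAdj L M a c ∧ distLE L M r c b

theorem distLE_self (L : FirstOrder.Language) (M : Type w) [L.Structure M] (r : ℕ) (a : M) :
    distLE L M r a a := by
  cases r with
  | zero => rfl
  | succ r => exact Or.inl rfl

/-- The `r`-neighbourhood of a tuple: all elements at Gaifman distance at most `r`
from some component of the tuple. -/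
def nbhd (L : FirstOrder.Language) (M : Type w) [L.Structure M] (r : ℕ) {k : ℕ}
    (u : Fin k → M) : Set M :=
  {b | ∃ i, distLE L M r (u i) b}

/-- `IsDistFormula L r d` says that the formula `d`, with two free variables, expresses
that the Gaifman distance between its two arguments is at most `r` (this is the property
of the formula `δ_{≤r}`). -/
def IsDistFormula.{v} (L : FirstOrder.Language) (r : ℕ) (d : L.Formula (Fin 2)) : Prop :=
  ∀ (M : Type v) [L.Structure M], ∀ a b : M, d.Realize ![a, b] ↔ distLE L M r a b

/-- The radius-`r` relativisation of a formula with free variables `x_0, …, x_{k-1}`,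
relative to a formula `d = δ_{≤r}` expressing distance at most `r`: every (universal)
quantifier `∀ y ψ` is replaced by `∀ y (⋁_i δ_{≤r}(x_i, y) → ψ)` (and consequently every
existential quantifier `∃ y ψ` by `∃ y (⋁_i δ_{≤r}(x_i, y) ∧ ψ)`). -/
def relativize {L : FirstOrder.Language} (d : L.Formula (Fin 2)) :
    ∀ {k n : ℕ}, L.BoundedFormula (Fin k) n → L.BoundedFormula (Fin k) n
  | _, _, .falsum => .falsum
  | _, _, .equal t₁ t₂ => .equal t₁ t₂
  | _, _, .rel R ts => .rel R ts
  | _, _, .imp f g => (relativize d f).imp (relativize d g)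
  | k, n, .all f =>
      ((((List.finRange k).map fun i =>
          BoundedFormula.relabel (![Sum.inl i, Sum.inr (Fin.last n)] : Fin 2 → (Fin k) ⊕ (Fin (n + 1))) d).foldr
            (· ⊔ ·) ⊥).imp (relativize d f)).all

/-- A formula is syntactically `r`-local (w.r.t. the distance formula `d = δ_{≤r}`) if it is
the radius-`r` relativisation of some formula. -/
def SynLocal {L : FirstOrder.Language} (d : L.Formula (Fin 2)) {k : ℕ}
    (φ : L.Formula (Fin k)) : Prop :=
  ∃ ψ : L.Formula (Fin k), φ = relativize d ψ

/-- The local `(q, r)`-type of a tuple `u` in `M`: the set of syntactically `r`-local formulas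
(w.r.t. the distance formula `d = δ_{≤r}`) of quantifier rank at most `q` satisfied by `u`. -/
def ltp {L : FirstOrder.Language} (d : L.Formula (Fin 2)) (q : ℕ) (M : Type w) [L.Structure M]
    {k : ℕ} (u : Fin k → M) : Set (L.Formula (Fin k)) :=
  {φ | SynLocal d φ ∧ qRank φ ≤ q ∧ φ.Realize u}

/-- The first-order `q`-type of a tuple `u` in `M`: the set of formulas of quantifier rank
at most `q` (with free variables among `x_0, …, x_{k-1}`) satisfied by `u`. -/
def ftp {L : FirstOrder.Language} (q : ℕ) (M : Type w) [L.Structure M]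
    {k : ℕ} (u : Fin k → M) : Set (L.Formula (Fin k)) :=
  {φ | qRank φ ≤ q ∧ φ.Realize u}

/-- The union of two disjoint structures (realized as a structure on the sum type):
a relation holds of a tuple iff the tuple lies entirely in one part and the relation
holds there. -/
def sumStructure (L : FirstOrder.Language) [L.IsRelational] (M N : Type w)
    [L.Structure M] [L.Structure N] : L.Structure (M ⊕ N) where
  funMap f _ := isEmptyElim f
  RelMap R t :=
    (∃ s, t = Sum.inl ∘ s ∧ Structure.RelMap R s) ∨
    (∃ s, t = Sum.inr ∘ s ∧ Structure.RelMap R s)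

/-- The substructure of `M` induced on a subset `S`. -/
def inducedStructure (L : FirstOrder.Language) [L.IsRelational] {M : Type w} [L.Structure M]
    (S : Set M) : L.Structure S where
  funMap f _ := isEmptyElim f
  RelMap R t := Structure.RelMap R fun i => (t i : M)

/-- A formula `φ(x_1, …, x_k)` is `r`-local if for every structure `M` and every tuple `u`,
`M ⊨ φ(u)` iff the substructure induced on the `r`-neighbourhood of `u` satisfies `φ(u)`. -/
def RLocal.{v} (L : FirstOrder.Language) [L.IsRelational] (r : ℕ) {k : ℕ}
    (φ : L.Formula (Fin k)) : Prop :=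
  ∀ (M : Type v) [L.Structure M] (u : Fin k → M),
    φ.Realize u ↔
      (letI := inducedStructure L (nbhd L M r u)
       Formula.Realize (M := nbhd L M r u) φ
         (fun i => ⟨u i, i, distLE_self L M r (u i)⟩))


/-!
Formulas of quantifier rank `q` cannot distinguish two tuples of a structure of bounded degree
whose `r`-neighbourhoods are isomorphic, where `r` depends only on `q`; and up to isomorphism
there are boundedly many `r`-neighbourhoods. Given a finite set `V` of instances, remove from a
parameter tuple `p` everything far away from the elements occurring in `V`, remembering only the
isomorphism type of the neighbourhood of `p`: this still determines the neighbourhood type of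
`(x, p)` for every `x ∈ V`, since neighbourhoods that are far apart can be glued independently.
So `p` matters only through one of `O(|V| ^ ℓ)` keys, while shattering `V` takes `2 ^ |V|`.
-/

open Set

section GaifmanBall

variable {L : FirstOrder.Language} {M : Type*} [L.Structure M]

theorem gaifmanAdj.symm {a b : M} (h : gaifmanAdj L M a b) : gaifmanAdj L M b a := by
  obtain ⟨hne, n, R, t, hR, ha, hb⟩ := h
  exact ⟨hne.symm, n, R, t, hR, hb, ha⟩

theorem distLE.succ {r : ℕ} {a b : M} (h : distLE L M r a b) : distLE L M (r + 1) a b := by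
  induction r generalizing a with
  | zero => exact Or.inl h
  | succ r ih => exact h.imp_right fun ⟨c, hac, hcb⟩ => ⟨c, hac, ih hcb⟩

theorem distLE.mono {r s : ℕ} (hrs : r ≤ s) {a b : M} (h : distLE L M r a b) :
    distLE L M s a b :=
  monotone_nat_of_le_succ (f := fun r => distLE L M r a b) (fun _ => distLE.succ) hrs h

theorem distLE.trans {r s : ℕ} {a b c : M} (hab : distLE L M r a b) (hbc : distLE L M s b c) :
    distLE L M (r + s) a c := by
  induction r generalizing a with
  | zero =>
    obtain rfl : a = b := hab
    exact hbc.mono (Nat.zero_add s).ge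
  | succ r ih =>
    rcases hab with rfl | ⟨x, hax, hxb⟩
    · exact hbc.mono (Nat.le_add_left s (r + 1))
    · rw [Nat.add_right_comm]
      exact Or.inr ⟨x, hax, ih hxb⟩

theorem distLE.symm {r : ℕ} {a b : M} (h : distLE L M r a b) : distLE L M r b a := by
  induction r generalizing a with
  | zero => exact Eq.symm h
  | succ r ih =>
    rcases h with rfl | ⟨c, hac, hcb⟩
    · exact distLE_self L M _ _
    · exact (ih hcb).trans (Or.inr ⟨a, hac.symm, rfl⟩ : distLE L M 1 c a)

theorem distLE_one_of_relMap {n : ℕ} {R : L.Relations n} {t : Fin n → M}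
    (hR : Structure.RelMap R t) (i j : Fin n) : distLE L M 1 (t i) (t j) := by
  by_cases hij : t i = t j
  · exact Or.inl hij
  · exact Or.inr ⟨t j, ⟨hij, n, R, t, hR, ⟨i, rfl⟩, ⟨j, rfl⟩⟩, rfl⟩

variable (L) in
/-- The set of all elements at Gaifman distance at most `r` from the set `A`. This is `nbhd` for
arbitrary sets in place of tuples. -/
def gaifmanBall (r : ℕ) (A : Set M) : Set M :=
  {b | ∃ a ∈ A, distLE L M r a b}

theorem subset_gaifmanBall (r : ℕ) (A : Set M) : A ⊆ gaifmanBall L r A :=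
  fun a ha => ⟨a, ha, distLE_self L M r a⟩

theorem gaifmanBall_mono {r s : ℕ} (hrs : r ≤ s) {A C : Set M} (hAC : A ⊆ C) :
    gaifmanBall L r A ⊆ gaifmanBall L s C :=
  fun _ ⟨a, ha, hab⟩ => ⟨a, hAC ha, hab.mono hrs⟩

theorem gaifmanBall_gaifmanBall_subset (r s : ℕ) (A : Set M) :
    gaifmanBall L s (gaifmanBall L r A) ⊆ gaifmanBall L (r + s) A :=
  fun _ ⟨_, ⟨a, ha, hab⟩, hbc⟩ => ⟨a, ha, hab.trans hbc⟩

theorem gaifmanBall_union (r : ℕ) (A C : Set M) :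
    gaifmanBall L r (A ∪ C) = gaifmanBall L r A ∪ gaifmanBall L r C := by
  ext b
  simp only [gaifmanBall, mem_union, mem_ofPred_eq, or_and_right, exists_or]

theorem disjoint_gaifmanBall {r s : ℕ} {A C : Set M} (h : Disjoint (gaifmanBall L (r + s) A) C) :
    Disjoint (gaifmanBall L r A) (gaifmanBall L s C) :=
  Set.disjoint_left.2 fun _ ⟨a, ha, hab⟩ ⟨_, hc, hcb⟩ =>
    Set.disjoint_left.1 h ⟨a, ha, hab.trans hcb.symm⟩ hc

theorem disjoint_gaifmanBall_one_gaifmanBall {r : ℕ} {A C : Set M}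
    (h : Disjoint (gaifmanBall L (2 * r + 1) A) C) :
    Disjoint (gaifmanBall L 1 (gaifmanBall L r A)) (gaifmanBall L r C) := by
  rw [show 2 * r + 1 = r + 1 + r by omega] at h
  exact (disjoint_gaifmanBall h).mono_left (gaifmanBall_gaifmanBall_subset r 1 A)

theorem not_relMap_of_disjoint_gaifmanBall {A C : Set M} (h : Disjoint (gaifmanBall L 1 A) C)
    {n : ℕ} (R : L.Relations n) {t : Fin n → M} {i j : Fin n} (hi : t i ∈ A) (hj : t j ∈ C) :
    ¬ Structure.RelMap R t :=
  fun hR => Set.disjoint_left.1 h ⟨t i, hi, distLE_one_of_relMap hR i j⟩ hj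

theorem encard_biUnion_le_mul {α β : Type*} {s : Set α} {f : α → Set β} {n : ℕ}
    (hf : ∀ a ∈ s, (f a).encard ≤ n) : (⋃ a ∈ s, f a).encard ≤ s.encard * n := by
  rcases s.finite_or_infinite with hs | hs
  · lift s to Finset α using hs
    calc (⋃ a ∈ s, f a).encard ≤ ∑ a ∈ s, (f a).encard := s.set_encard_biUnion_le f
      _ ≤ ∑ _a ∈ s, (n : ℕ∞) := Finset.sum_le_sum hf
      _ = _ := by simp
  · obtain rfl | hn := eq_or_ne n 0
    · simp_all
    · simp [hs.encard_eq, ENat.top_mul, hn]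

theorem encard_gaifmanBall_le {d : ℕ} (hd : ∀ a : M, {b | gaifmanAdj L M a b}.encard ≤ d)
    (r : ℕ) (A : Set M) :
    (gaifmanBall L r A).encard ≤ A.encard * ((d + 1) ^ r : ℕ) := by
  induction r generalizing A with
  | zero =>
    have hA : gaifmanBall L 0 A = A := by ext; simp [gaifmanBall, distLE]
    simp [hA]
  | succ r ih =>
    have hstep : gaifmanBall L (r + 1) A ⊆
        gaifmanBall L r (⋃ a ∈ A, insert a {b | gaifmanAdj L M a b}) := by
      rintro b ⟨a, ha, rfl | ⟨c, hac, hcb⟩⟩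
      · exact subset_gaifmanBall r _ (mem_biUnion ha (mem_insert a _))
      · exact ⟨c, mem_biUnion ha (mem_insert_of_mem a hac), hcb⟩
    have hcard : (⋃ a ∈ A, insert a {b | gaifmanAdj L M a b}).encard ≤ A.encard * (d + 1 : ℕ) :=
      encard_biUnion_le_mul fun a _ => (encard_insert_le _ _).trans <| by
        push_cast
        gcongr
        exact hd a
    calc (gaifmanBall L (r + 1) A).encard
        ≤ (⋃ a ∈ A, insert a {b | gaifmanAdj L M a b}).encard * ((d + 1) ^ r : ℕ) :=
          (encard_le_encard hstep).trans (ih _)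
      _ ≤ A.encard * (d + 1 : ℕ) * ((d + 1) ^ r : ℕ) := by gcongr
      _ = A.encard * ((d + 1) ^ (r + 1) : ℕ) := by push_cast; ring

theorem encard_range_le {ι : Type*} [Finite ι] (a : ι → M) : (range a).encard ≤ Nat.card ι := by
  rw [← image_univ]
  exact (encard_image_le a univ).trans_eq (by simp [encard_univ, ENat.card_eq_coe_natCard])

theorem encard_gaifmanBall_range_le {ι : Type*} [Finite ι] {d : ℕ}
    (hd : ∀ a : M, {b | gaifmanAdj L M a b}.encard ≤ d) (r : ℕ) (a : ι → M) :
    (gaifmanBall L r (range a)).encard ≤ (Nat.card ι * (d + 1) ^ r : ℕ) :=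
  (encard_gaifmanBall_le hd r _).trans <| by
    rw [Nat.cast_mul]
    gcongr
    exact encard_range_le a

theorem encard_gaifmanBall_biUnion_range_le {ι : Type*} [Finite ι] {d : ℕ}
    (hd : ∀ a : M, {b | gaifmanAdj L M a b}.encard ≤ d) (r : ℕ) {V : Set (ι → M)}
    (hV : V.Finite) :
    (gaifmanBall L r (⋃ a ∈ V, range a)).encard ≤
      (V.ncard * (Nat.card ι * (d + 1) ^ r) : ℕ) := by
  rw [Nat.cast_mul, hV.cast_ncard_eq, Nat.cast_mul, ← mul_assoc]
  refine (encard_gaifmanBall_le hd _ _).trans ?_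
  gcongr
  exact encard_biUnion_le_mul fun a _ => encard_range_le a

theorem finite_gaifmanBall {d : ℕ} (hd : ∀ a : M, {b | gaifmanAdj L M a b}.encard ≤ d) (r : ℕ)
    {A : Set M} (hA : A.Finite) : (gaifmanBall L r A).Finite := by
  rw [← encard_lt_top_iff] at hA ⊢
  exact (encard_gaifmanBall_le hd r A).trans_lt (WithTop.mul_lt_top hA (ENat.natCast_lt_top _))

end GaifmanBall

section NeighbourhoodIsomorphism

variable {L : FirstOrder.Language} {M N P : Type*} [L.Structure M] [L.Structure N] [L.Structure P]
  {ι κ : Type*} {r s : ℕ}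

variable (L) in
/-- A partial isomorphism: a partial bijection that preserves and reflects all relations on its
source. -/
def IsPartialIso (e : PartialEquiv M N) : Prop :=
  ∀ ⦃n : ℕ⦄ (R : L.Relations n) (t : Fin n → M), (∀ i, t i ∈ e.source) →
    (Structure.RelMap R (e ∘ t) ↔ Structure.RelMap R t)

namespace IsPartialIso

variable {e : PartialEquiv M N} {A : Set M}

theorem symm (he : IsPartialIso L e) : IsPartialIso L e.symm := by
  intro n R t ht
  have hright : e ∘ (e.symm ∘ t) = t := funext fun i => e.right_inv (ht i)
  rw [← he R (e.symm ∘ t) fun i => e.map_target (ht i), hright]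

theorem gaifmanAdj_map (he : IsPartialIso L e) {a b : M} (ha : gaifmanBall L 1 {a} ⊆ e.source)
    (h : gaifmanAdj L M a b) : gaifmanAdj L N (e a) (e b) := by
  obtain ⟨hne, n, R, t, hR, ⟨i, rfl⟩, ⟨j, rfl⟩⟩ := h
  have ht : ∀ l, t l ∈ e.source := fun l => ha ⟨t i, rfl, distLE_one_of_relMap hR i l⟩
  exact ⟨fun heq => hne (e.injOn (ht i) (ht j) heq), n, R, e ∘ t, (he R t ht).2 hR,
    ⟨i, rfl⟩, ⟨j, rfl⟩⟩

theorem distLE_map (he : IsPartialIso L e) {a b : M} (ha : gaifmanBall L r {a} ⊆ e.source)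
    (h : distLE L M r a b) : distLE L N r (e a) (e b) := by
  induction r generalizing a with
  | zero => exact congrArg e h
  | succ r ih =>
    rcases h with rfl | ⟨c, hac, hcb⟩
    · exact distLE_self L N _ _
    · refine Or.inr ⟨e c, he.gaifmanAdj_map ?_ hac, ih ?_ hcb⟩
      · exact (gaifmanBall_mono (Nat.le_add_left 1 r) Subset.rfl).trans ha
      · rintro x ⟨_, rfl, hcx⟩
        exact ha ⟨a, rfl, Or.inr ⟨_, hac, hcx⟩⟩

theorem mapsTo_gaifmanBall (he : IsPartialIso L e) (hA : gaifmanBall L r A ⊆ e.source) :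
    MapsTo e (gaifmanBall L r A) (gaifmanBall L r (e '' A)) :=
  fun _ ⟨a, ha, hab⟩ => ⟨e a, mem_image_of_mem e ha, he.distLE_map
    ((gaifmanBall_mono le_rfl (singleton_subset_iff.2 ha)).trans hA) hab⟩

theorem isImage_gaifmanBall (he : IsPartialIso L e) (hA : gaifmanBall L r A ⊆ e.source)
    (hA' : gaifmanBall L r (e '' A) ⊆ e.target) :
    e.IsImage (gaifmanBall L r A) (gaifmanBall L r (e '' A)) := by
  refine fun x hx => ⟨fun hex => ?_, fun hxA => he.mapsTo_gaifmanBall hA hxA⟩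
  have hback := he.symm.mapsTo_gaifmanBall hA' hex
  rwa [e.left_inv hx, e.symm_image_image_of_subset_source ((subset_gaifmanBall r A).trans hA)]
    at hback

theorem exists_disjointUnion {e₁ e₂ : PartialEquiv M N} (h₁ : IsPartialIso L e₁)
    (h₂ : IsPartialIso L e₂) (hs : Disjoint (gaifmanBall L 1 e₁.source) e₂.source)
    (ht : Disjoint (gaifmanBall L 1 e₁.target) e₂.target) :
    ∃ e : PartialEquiv M N, IsPartialIso L e ∧ e.source = e₁.source ∪ e₂.source ∧
      e.target = e₁.target ∪ e₂.target ∧ EqOn e e₁ e₁.source ∧ EqOn e e₂ e₂.source := by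
  classical
  have hs' : Disjoint e₁.source e₂.source := hs.mono_left (subset_gaifmanBall 1 _)
  have ht' : Disjoint e₁.target e₂.target := ht.mono_left (subset_gaifmanBall 1 _)
  have heq := e₁.disjointUnion_eq_piecewise e₂ hs' ht'
  have he₁ : EqOn (e₁.disjointUnion e₂ hs' ht') e₁ e₁.source := fun x hx => by simp [heq, hx]
  have he₂ : EqOn (e₁.disjointUnion e₂ hs' ht') e₂ e₂.source := fun x hx => by
    simp [heq, Set.disjoint_right.1 hs' hx]
  refine ⟨e₁.disjointUnion e₂ hs' ht', fun n R t hmem => ?_, rfl, rfl, he₁, he₂⟩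
  by_cases hall₁ : ∀ i, t i ∈ e₁.source
  · rw [show _ ∘ t = e₁ ∘ t from funext fun i => he₁ (hall₁ i), h₁ R t hall₁]
  by_cases hall₂ : ∀ i, t i ∈ e₂.source
  · rw [show _ ∘ t = e₂ ∘ t from funext fun i => he₂ (hall₂ i), h₂ R t hall₂]
  push Not at hall₁ hall₂
  obtain ⟨⟨j, hj⟩, ⟨i, hi⟩⟩ := And.intro hall₁ hall₂
  replace hi : t i ∈ e₁.source := (hmem i).resolve_right hi
  replace hj : t j ∈ e₂.source := (hmem j).resolve_left hj
  refine iff_of_false (not_relMap_of_disjoint_gaifmanBall ht R (i := i) (j := j) ?_ ?_)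
    (not_relMap_of_disjoint_gaifmanBall hs R hi hj)
  · rw [Function.comp_apply, he₁ hi]
    exact e₁.map_source hi
  · rw [Function.comp_apply, he₂ hj]
    exact e₂.map_source hj

end IsPartialIso

variable (L) in
/-- `e` is an isomorphism between the substructures induced on the `r`-neighbourhoods of the
tuples `a` and `b`, and it maps `a` to `b`. -/
structure IsNbhdIso (r : ℕ) (a : ι → M) (b : ι → N) (e : PartialEquiv M N) : Prop where
  isPartialIso : IsPartialIso L e
  source_eq : e.source = gaifmanBall L r (range a)
  target_eq : e.target = gaifmanBall L r (range b)
  comp_eq : e ∘ a = b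

variable (L) in
/-- The tuples `a` and `b` have isomorphic `r`-neighbourhoods. -/
def NbhdIsomorphic (r : ℕ) (a : ι → M) (b : ι → N) : Prop :=
  ∃ e : PartialEquiv M N, IsNbhdIso L r a b e

namespace IsNbhdIso

variable {a : ι → M} {b : ι → N} {e : PartialEquiv M N}

theorem mem_source (h : IsNbhdIso L r a b e) (i : ι) : a i ∈ e.source :=
  h.source_eq ▸ subset_gaifmanBall r _ (mem_range_self i)

theorem symm (h : IsNbhdIso L r a b e) : IsNbhdIso L r b a e.symm where
  isPartialIso := h.isPartialIso.symm
  source_eq := h.target_eq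
  target_eq := h.source_eq
  comp_eq := by
    rw [← h.comp_eq]
    exact funext fun i => e.left_inv (h.mem_source i)

theorem mapsTo_gaifmanBall (h : IsNbhdIso L r a b e) (hs : s ≤ r) :
    MapsTo e (gaifmanBall L s (range a)) (gaifmanBall L s (range b)) := by
  rw [← h.comp_eq, range_comp]
  exact h.isPartialIso.mapsTo_gaifmanBall
    ((gaifmanBall_mono hs Subset.rfl).trans h.source_eq.ge)

theorem nbhdIsomorphic_comp {t : ℕ} (h : IsNbhdIso L t a b e) (hrs : s + r ≤ t) {c : κ → M}
    (hc : range c ⊆ gaifmanBall L s (range a)) : NbhdIsomorphic L r c (e ∘ c) := by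
  have hc' : e '' range c ⊆ gaifmanBall L s (range b) :=
    ((h.mapsTo_gaifmanBall (by omega)).mono_left hc).image_subset
  have hsource : gaifmanBall L r (range c) ⊆ e.source := h.source_eq ▸
    (gaifmanBall_mono le_rfl hc).trans ((gaifmanBall_gaifmanBall_subset s r _).trans
      (gaifmanBall_mono hrs Subset.rfl))
  have htarget : gaifmanBall L r (e '' range c) ⊆ e.target := h.target_eq ▸
    (gaifmanBall_mono le_rfl hc').trans ((gaifmanBall_gaifmanBall_subset s r _).trans
      (gaifmanBall_mono hrs Subset.rfl))
  exact ⟨(h.isPartialIso.isImage_gaifmanBall hsource htarget).restr,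
    fun n R t ht => h.isPartialIso R t fun i => (ht i).1, inter_eq_right.2 hsource,
    by rw [range_comp]; exact inter_eq_right.2 htarget, rfl⟩

end IsNbhdIso

namespace NbhdIsomorphic

variable {a : ι → M} {b : ι → N}

theorem refl (r : ℕ) (a : ι → M) : NbhdIsomorphic L r a a :=
  ⟨.ofSet (gaifmanBall L r (range a)), fun _ _ _ _ => Iff.rfl, rfl, rfl, rfl⟩

theorem symm (h : NbhdIsomorphic L r a b) : NbhdIsomorphic L r b a :=
  let ⟨e, he⟩ := h
  ⟨e.symm, he.symm⟩

theorem trans {c : ι → P} (hab : NbhdIsomorphic L r a b) (hbc : NbhdIsomorphic L r b c) :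
    NbhdIsomorphic L r a c := by
  obtain ⟨e, he⟩ := hab
  obtain ⟨f, hf⟩ := hbc
  have hef : e.target = f.source := he.target_eq.trans hf.source_eq.symm
  refine ⟨e.trans' f hef, fun n R t ht => ?_, he.source_eq, hf.target_eq, ?_⟩
  · exact (hf.isPartialIso R (e ∘ t) fun i => hef ▸ e.map_source (ht i)).trans
      (he.isPartialIso R t ht)
  · rw [← hf.comp_eq, ← he.comp_eq]
    rfl

/-- Only the correspondence `a i ↦ b i` matters, so passing to a subset of it is harmless. -/
theorem of_forall_exists (h : NbhdIsomorphic L r a b) {c : κ → M} {d : κ → N}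
    (hcd : ∀ k, ∃ i, a i = c k ∧ b i = d k) : NbhdIsomorphic L r c d := by
  obtain ⟨e, he⟩ := h
  choose σ hσa hσb using hcd
  obtain rfl : a ∘ σ = c := funext hσa
  obtain rfl : b ∘ σ = d := funext hσb
  rw [← he.comp_eq]
  exact he.nbhdIsomorphic_comp (s := 0) (Nat.zero_add r).le
    ((range_comp_subset_range σ a).trans (subset_gaifmanBall 0 _))

theorem comp (h : NbhdIsomorphic L r a b) (σ : κ → ι) : NbhdIsomorphic L r (a ∘ σ) (b ∘ σ) :=
  h.of_forall_exists fun k => ⟨σ k, rfl, rfl⟩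

theorem sumElim {c : κ → M} {d : κ → N} (hab : NbhdIsomorphic L r a b)
    (hcd : NbhdIsomorphic L r c d)
    (hac : Disjoint (gaifmanBall L (2 * r + 1) (range a)) (range c))
    (hbd : Disjoint (gaifmanBall L (2 * r + 1) (range b)) (range d)) :
    NbhdIsomorphic L r (Sum.elim a c) (Sum.elim b d) := by
  obtain ⟨e₁, h₁⟩ := hab
  obtain ⟨e₂, h₂⟩ := hcd
  obtain ⟨e, he, hsource, htarget, he₁, he₂⟩ := h₁.isPartialIso.exists_disjointUnion
    h₂.isPartialIso
    (h₁.source_eq ▸ h₂.source_eq ▸ disjoint_gaifmanBall_one_gaifmanBall hac)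
    (h₁.target_eq ▸ h₂.target_eq ▸ disjoint_gaifmanBall_one_gaifmanBall hbd)
  refine ⟨e, he, ?_, ?_, ?_⟩
  · rw [hsource, h₁.source_eq, h₂.source_eq, Sum.elim_range, gaifmanBall_union]
  · rw [htarget, h₁.target_eq, h₂.target_eq, Sum.elim_range, gaifmanBall_union]
  · rw [Sum.comp_elim, ← h₁.comp_eq, ← h₂.comp_eq]
    exact congrArg₂ Sum.elim (funext fun i => he₁ (h₁.mem_source i))
      (funext fun k => he₂ (h₂.mem_source k))

end NbhdIsomorphic

end NeighbourhoodIsomorphism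

section Locality

variable {L : FirstOrder.Language} {M : Type*} [L.Structure M] {ι κ : Type*} {r : ℕ}

/-- If no such `c'` existed, all elements of the same neighbourhood type as `c` would lie near `b`.
The isomorphism from the neighbourhood of `b` to that of `a` permutes these finitely many elements,
so `c` would be one of its values and hence lie near `a`. -/
theorem NbhdIsomorphic.exists_far {a b : ι → M} (h : NbhdIsomorphic L (3 * r + 1) a b)
    (hfin : (gaifmanBall L (2 * r + 1) (range b)).Finite) {c : M}
    (hc : c ∉ gaifmanBall L (2 * r + 1) (range a)) :
    ∃ c' ∉ gaifmanBall L (2 * r + 1) (range b),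
      NbhdIsomorphic L r (fun _ : Unit => c) (fun _ : Unit => c') := by
  by_contra! hnear
  obtain ⟨e, he⟩ := h.symm
  set T : Set M := {x | NbhdIsomorphic L r (fun _ : Unit => c) (fun _ : Unit => x)}
  have hT : T ⊆ gaifmanBall L (2 * r + 1) (range b) := fun x hx =>
    by_contra fun hxb => hnear x hxb hx
  have hmaps : MapsTo e T T := fun x hx =>
    hx.trans (he.nbhdIsomorphic_comp (s := 2 * r + 1) (by omega)
      (range_subset_iff.2 fun _ => hT hx))
  have hinj : InjOn e T := e.injOn.mono <|
    hT.trans ((gaifmanBall_mono (by omega) Subset.rfl).trans he.source_eq.ge)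
  obtain ⟨x, hx, rfl⟩ : c ∈ e '' T :=
    ((hfin.subset hT).injOn_iff_bijOn_of_mapsTo hmaps |>.1 hinj).surjOn (refl r _)
  exact hc (he.mapsTo_gaifmanBall (by omega) (hT hx))

theorem NbhdIsomorphic.forth {a b : ι → M} (h : NbhdIsomorphic L (3 * r + 1) a b)
    (hfin : (gaifmanBall L (2 * r + 1) (range b)).Finite) (c : M) :
    ∃ c', NbhdIsomorphic L r (Sum.elim a fun _ : Unit => c) (Sum.elim b fun _ : Unit => c') := by
  by_cases hc : c ∈ gaifmanBall L (2 * r + 1) (range a)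
  · obtain ⟨e, he⟩ := h
    refine ⟨e c, ?_⟩
    have hext := he.nbhdIsomorphic_comp (s := 2 * r + 1) (r := r) (by omega)
      (c := Sum.elim a fun _ : Unit => c) (by
        rw [Sum.elim_range]
        exact union_subset (subset_gaifmanBall _ _) (range_subset_iff.2 fun _ => hc))
    rwa [Sum.comp_elim, he.comp_eq] at hext
  · obtain ⟨c', hc', hcc'⟩ := h.exists_far hfin hc
    obtain ⟨e, he⟩ := h
    have hab : NbhdIsomorphic L r a b := he.comp_eq ▸
      he.nbhdIsomorphic_comp (s := 0) (by omega) (subset_gaifmanBall 0 _)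
    exact ⟨c', hab.sumElim hcc' (by simpa using hc) (by simpa using hc')⟩

/-- The radius of the neighbourhoods that determine the truth of formulas of quantifier rank `q`
in a locally finite structure. -/
def localityRadius : ℕ → ℕ
  | 0 => 0
  | q + 1 => 3 * localityRadius q + 1

theorem exists_term_eq_var [L.IsRelational] {α : Type*} (t : L.Term α) :
    ∃ i, t = Term.var i := by
  cases t with
  | var i => exact ⟨i, rfl⟩
  | func f => exact isEmptyElim f

theorem IsNbhdIso.realize_term [L.IsRelational] {N α : Type*} [L.Structure N] {a : α → M}
    {b : α → N} {e : PartialEquiv M N} (h : IsNbhdIso L r a b e) (t : L.Term α) :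
    t.realize a ∈ e.source ∧ e (t.realize a) = t.realize b := by
  obtain ⟨i, rfl⟩ := exists_term_eq_var t
  exact ⟨h.mem_source i, congrFun h.comp_eq i⟩

theorem NbhdIsomorphic.realize_boundedFormula_iff [L.IsRelational] {α : Type*} [Finite α]
    (hfin : ∀ (r : ℕ) (A : Set M), A.Finite → (gaifmanBall L r A).Finite)
    {n : ℕ} (φ : L.BoundedFormula α n) {q : ℕ} (hq : qRank φ ≤ q) {v v' : α → M}
    {xs xs' : Fin n → M}
    (h : NbhdIsomorphic L (localityRadius q) (Sum.elim v xs) (Sum.elim v' xs')) :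
    φ.Realize v xs ↔ φ.Realize v' xs' := by
  induction φ generalizing q v v' with
  | falsum => rfl
  | equal t₁ t₂ =>
    obtain ⟨e, he⟩ := h
    obtain ⟨⟨h₁, heq₁⟩, ⟨h₂, heq₂⟩⟩ := And.intro (he.realize_term t₁) (he.realize_term t₂)
    simp only [BoundedFormula.Realize, ← heq₁, ← heq₂, e.injOn.eq_iff h₁ h₂]
  | rel R ts =>
    obtain ⟨e, he⟩ := h
    simp only [BoundedFormula.Realize, ← (he.realize_term (ts _)).2]
    exact (he.isPartialIso R _ fun i => (he.realize_term (ts i)).1).symm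
  | imp f g ihf ihg =>
    rw [qRank, max_le_iff] at hq
    rw [BoundedFormula.realize_imp, BoundedFormula.realize_imp, ihf hq.1 h, ihg hq.2 h]
  | @all n f ih =>
    rw [qRank] at hq
    obtain ⟨q, rfl⟩ : ∃ p, q = p + 1 := ⟨q - 1, by omega⟩
    have snoc_realize : ∀ {v v' : α → M} {xs xs' : Fin n → M} {c c' : M},
        NbhdIsomorphic L (localityRadius q) (Sum.elim (Sum.elim v xs) fun _ : Unit => c)
          (Sum.elim (Sum.elim v' xs') fun _ : Unit => c') →
        (f.Realize v (Fin.snoc xs c) ↔ f.Realize v' (Fin.snoc xs' c')) := by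
      refine fun hc => ih (Nat.le_of_succ_le_succ hq) (hc.of_forall_exists ?_)
      rintro (i | j)
      · exact ⟨.inl (.inl i), rfl, rfl⟩
      · induction j using Fin.lastCases with
        | last => exact ⟨.inr (), by simp, by simp⟩
        | cast j => exact ⟨.inl (.inr j), by simp, by simp⟩
    have forall_realize : ∀ {v v' : α → M} {xs xs' : Fin n → M},
        NbhdIsomorphic L (localityRadius (q + 1)) (Sum.elim v xs) (Sum.elim v' xs') →
        f.all.Realize v xs → f.all.Realize v' xs' := by
      intro v v' xs xs' hv hall c'
      obtain ⟨c, hc⟩ := hv.symm.forth (hfin _ _ (finite_range _)) c'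
      exact (snoc_realize hc).2 (hall c)
    exact ⟨forall_realize h, forall_realize h.symm⟩

variable (L) in
/-- A set of tuples is Gaifman-local of radius `r` if membership of a tuple depends only on the
isomorphism type of its `r`-neighbourhood. -/
def IsGaifmanLocal (r : ℕ) (Q : Set (ι → M)) : Prop :=
  ∀ ⦃a b : ι → M⦄, NbhdIsomorphic L r a b → a ∈ Q → b ∈ Q

theorem IsGaifmanLocal.preimage_comp {Q : Set (κ → M)} (hQ : IsGaifmanLocal L r Q) (σ : κ → ι) :
    IsGaifmanLocal L r ((· ∘ σ) ⁻¹' Q) :=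
  fun _ _ hab ha => hQ (hab.comp σ) ha

theorem isGaifmanLocal_setOf_realize [L.IsRelational] [Finite ι]
    (hfin : ∀ (r : ℕ) (A : Set M), A.Finite → (gaifmanBall L r A).Finite)
    (φ : L.Formula ι) {q : ℕ} (hq : qRank φ ≤ q) :
    IsGaifmanLocal L (localityRadius q) {a : ι → M | φ.Realize a} := by
  refine fun a b hab ha => (NbhdIsomorphic.realize_boundedFormula_iff hfin φ hq ?_).1 ha
  refine hab.of_forall_exists ?_
  rintro (i | j)
  · exact ⟨i, rfl, rfl⟩
  · exact j.elim0

end Locality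

section NeighbourhoodCode

variable {L : FirstOrder.Language} {M : Type*} [L.Structure M]

variable (L) in
/-- Codes for the isomorphism types of neighbourhoods with at most `n` elements of tuples indexed
by `ι`: a universe inside `Fin (n + 1)`, the interpretations of the relation symbols on it, and the
entries of the tuple. There is one spare element so that `Fin (n + 1)` is never empty. -/
abbrev NbhdCode (ι : Type*) (n : ℕ) :=
  Set (Fin (n + 1)) × ((R : Σ m, L.Relations m) → Set (Fin R.1 → Fin (n + 1))) ×
    (ι → Fin (n + 1))

theorem exists_nbhdCode_nbhdIsomorphic_of_eq {ι : Type*} {r n : ℕ}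
    (hn : ∀ a : ι → M, (gaifmanBall L r (range a)).encard ≤ n) :
    ∃ code : (ι → M) → NbhdCode L ι n, ∀ a b, code a = code b → NbhdIsomorphic L r a b := by
  rcases isEmpty_or_nonempty M with hM | hM
  · exact ⟨fun _ => ⟨∅, fun _ => ∅, 0⟩, fun a b _ => Subsingleton.elim a b ▸ .refl r a⟩
  have exists_chart : ∀ a : ι → M, ∃ f : PartialEquiv M (Fin (n + 1)),
      f.source = gaifmanBall L r (range a) := fun a => by
    have hle : (gaifmanBall L r (range a)).encard ≤ (univ : Set (Fin (n + 1))).encard :=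
      (hn a).trans (by simp [encard_univ])
    obtain ⟨f, -, hf⟩ := (finite_of_encard_le_coe (hn a)).exists_injOn_of_encard_le hle
    exact ⟨hf.toPartialEquiv, rfl⟩
  choose f hf using exists_chart
  refine ⟨fun a => ⟨(f a).target, fun R => {t | Structure.RelMap R.2 ((f a).symm ∘ t)}, f a ∘ a⟩,
    fun a b hab => ?_⟩
  obtain ⟨htarget, hrel, hentries⟩ : (f a).target = (f b).target ∧ _ ∧ f a ∘ a = f b ∘ b := by
    simpa only [Prod.mk.injEq] using hab
  refine ⟨(f a).trans' (f b).symm htarget, fun m R t ht => ?_, hf a, hf b, ?_⟩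
  · have hRt : Structure.RelMap R ((f a).symm ∘ (f a ∘ t)) ↔
        Structure.RelMap R ((f b).symm ∘ (f a ∘ t)) :=
      Set.ext_iff.1 (congrFun hrel ⟨m, R⟩) (f a ∘ t)
    rwa [show (f a).symm ∘ (f a ∘ t) = t from funext fun i => (f a).left_inv (ht i),
      Iff.comm] at hRt
  · calc (f b).symm ∘ (f a ∘ a) = (f b).symm ∘ (f b ∘ b) := by rw [hentries]
      _ = b := funext fun i => (f b).left_inv (hf b ▸ subset_gaifmanBall r _ (mem_range_self i))

variable (L) in
/-- The equivalence relation of having isomorphic `r`-neighbourhoods, on the tuples of a single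
structure. -/
def nbhdSetoid (r : ℕ) (ι : Type*) (M : Type*) [L.Structure M] : Setoid (ι → M) where
  r := NbhdIsomorphic L r
  iseqv := ⟨.refl r, .symm, .trans⟩

theorem exists_nbhdCode_eq_iff {ι : Type*} {r n : ℕ}
    (hn : ∀ a : ι → M, (gaifmanBall L r (range a)).encard ≤ n) :
    ∃ code : (ι → M) → NbhdCode L ι n, ∀ a b, code a = code b ↔ NbhdIsomorphic L r a b := by
  obtain ⟨code, hcode⟩ := exists_nbhdCode_nbhdIsomorphic_of_eq hn
  let rep (a : ι → M) : ι → M := (Quotient.mk (nbhdSetoid L r ι M) a).out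
  have hrep : ∀ a, NbhdIsomorphic L r (rep a) a := fun a => Quotient.mk_out (s := nbhdSetoid ..) a
  refine ⟨code ∘ rep, fun a b => ⟨fun h => ?_, fun h => ?_⟩⟩
  · exact ((hrep a).symm.trans (hcode _ _ h)).trans (hrep b)
  · exact congrArg (fun t => code (Quotient.out t)) (Quotient.sound h)

end NeighbourhoodCode

section Counting

variable {L : FirstOrder.Language} {M : Type*} [L.Structure M] {ι κ : Type*} [Finite ι]

theorem exists_le_card_forall_mem_of_mem_succ {D : ℕ → Set M} (hD : Monotone D) (p : ι → M) :
    ∃ n ≤ Nat.card ι, ∀ i, p i ∈ D (n + 1) → p i ∈ D n := by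
  by_contra! hgap
  choose i hi hi' using fun n : Fin (Nat.card ι + 1) => hgap n (Nat.le_of_lt_succ n.2)
  have hinj : Function.Injective i := .of_lt_imp_ne fun m n hmn heq =>
    hi' n (heq ▸ hD (Nat.succ_le_of_lt hmn) (hi m))
  simpa using Nat.card_le_card_of_injective i hinj

/-- Some annulus of width `2 * r + 1` around `A` contains no entry of `p`, so that the entries
outside can be moved to those of `p'` independently of everything inside. -/
theorem NbhdIsomorphic.sumElim_of_eq_near {r : ℕ} {A : Set M} {p p' : ι → M}
    (h : NbhdIsomorphic L r p p')
    (hnear : ∀ i, p i ∈ gaifmanBall L ((Nat.card ι + 1) * (2 * r + 1)) A ∨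
      p' i ∈ gaifmanBall L ((Nat.card ι + 1) * (2 * r + 1)) A → p i = p' i)
    {x : κ → M} (hx : range x ⊆ A) : NbhdIsomorphic L r (Sum.elim x p) (Sum.elim x p') := by
  set D : ℕ → Set M := fun n => gaifmanBall L (n * (2 * r + 1)) A
  have hD : Monotone D := fun m n hmn => gaifmanBall_mono (Nat.mul_le_mul_right _ hmn) Subset.rfl
  obtain ⟨n, hn, hgap⟩ := exists_le_card_forall_mem_of_mem_succ hD p
  have hball : gaifmanBall L (2 * r + 1) (D n) ⊆ D (n + 1) :=
    (gaifmanBall_gaifmanBall_subset _ _ _).trans (gaifmanBall_mono (Nat.succ_mul _ _).ge Subset.rfl)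
  have hDnear : D (n + 1) ⊆ D (Nat.card ι + 1) := hD (Nat.succ_le_succ hn)
  have hfar : ∀ i : {i // p i ∉ D n}, p i ∉ D (n + 1) := fun i hi => i.2 (hgap i hi)
  have hfar' : ∀ i : {i // p i ∉ D n}, p' i ∉ D (n + 1) := fun i hi =>
    hfar i (hnear i (.inr (hDnear hi)) ▸ hi)
  have hglue := (NbhdIsomorphic.refl r ((↑) : D n → M)).sumElim
    (h.comp ((↑) : {i // p i ∉ D n} → ι))
    (by
      rw [Subtype.range_coe, Set.disjoint_right]
      rintro _ ⟨i, rfl⟩ hi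
      exact hfar i (hball hi))
    (by
      rw [Subtype.range_coe, Set.disjoint_right]
      rintro _ ⟨i, rfl⟩ hi
      exact hfar' i (hball hi))
  refine hglue.of_forall_exists ?_
  rintro (k | i)
  · exact ⟨.inl ⟨x k, subset_gaifmanBall _ _ (hx (mem_range_self k))⟩, rfl, rfl⟩
  · by_cases hi : p i ∈ D n
    · exact ⟨.inl ⟨p i, hi⟩, rfl, hnear i (.inl (hDnear (hD n.le_succ hi)))⟩
    · exact ⟨.inr ⟨i, hi⟩, rfl, rfl⟩

theorem ncard_powerset_le_of_shattered {X P T K : Type*} [Finite T] [Finite K] {V : Set X}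
    (type : P → X → T) (key : P → K)
    (hkey : ∀ p p', key p = key p' → ∀ x ∈ V, type p x = type p' x)
    (hV : ∀ W ⊆ V, ∃ (p : P) (Θ : Set T), ∀ x ∈ V, type p x ∈ Θ ↔ x ∈ W) :
    (𝒫 V).ncard ≤ Nat.card K * 2 ^ Nat.card T := by
  choose p Θ hΘ using hV
  let data : 𝒫 V → K × Set T := fun W => (key (p W W.2), Θ W W.2)
  have hdata : Function.Injective data := by
    rintro ⟨W, hW⟩ ⟨W', hW'⟩ h
    obtain ⟨hkeys, hΘs⟩ := Prod.mk.inj h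
    ext x
    by_cases hx : x ∈ V
    · change x ∈ W ↔ x ∈ W'
      rw [← hΘ W hW x hx, ← hΘ W' hW' x hx, hkey _ _ hkeys x hx, hΘs]
    · exact iff_of_false (fun h => hx (hW h)) (fun h => hx (hW' h))
  calc (𝒫 V).ncard ≤ Nat.card (K × Set T) := Nat.card_le_card_of_injective data hdata
    _ = Nat.card K * 2 ^ Nat.card T := by
      rw [Nat.card_prod, show Nat.card (Set T) = Nat.card (T → Prop) from rfl, Nat.card_fun]
      simp

theorem eq_of_partialInv_val_eq {α : Type*} {S : Set α} {x y : α}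
    (h : Function.partialInv ((↑) : S → α) x = Function.partialInv ((↑) : S → α) y)
    (hxy : x ∈ S ∨ y ∈ S) : x = y := by
  have hinv := (Subtype.val_injective (p := (· ∈ S))).isPartialInv
  rcases hxy with hx | hy
  · exact (hinv ⟨x, hx⟩ y).1 (h ▸ (hinv ⟨x, hx⟩ x).2 rfl)
  · exact ((hinv ⟨y, hy⟩ x).1 (h ▸ (hinv ⟨y, hy⟩ y).2 rfl)).symm

variable [Finite κ] [Finite (Σ n, L.Relations n)]

theorem two_pow_ncard_le_of_shattered_by_isGaifmanLocal {d r : ℕ}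
    (hd : ∀ a : M, {b | gaifmanAdj L M a b}.encard ≤ d) {V : Set (κ → M)} (hVfin : V.Finite)
    (hV : ∀ W ⊆ V, ∃ (Q : Set (κ ⊕ ι → M)) (p : ι → M), IsGaifmanLocal L r Q ∧
      ∀ x ∈ V, Sum.elim x p ∈ Q ↔ x ∈ W) :
    2 ^ V.ncard ≤ Nat.card (NbhdCode L ι (Nat.card ι * (d + 1) ^ r)) *
      (V.ncard * (Nat.card κ * (d + 1) ^ ((Nat.card ι + 1) * (2 * r + 1))) + 1) ^ Nat.card ι *
      2 ^ Nat.card (NbhdCode L (κ ⊕ ι) (Nat.card (κ ⊕ ι) * (d + 1) ^ r)) := by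
  obtain ⟨code, hcode⟩ := exists_nbhdCode_eq_iff (encard_gaifmanBall_range_le (ι := ι) hd r)
  obtain ⟨code', hcode'⟩ := exists_nbhdCode_eq_iff (encard_gaifmanBall_range_le (ι := κ ⊕ ι) hd r)
  set S := gaifmanBall L ((Nat.card ι + 1) * (2 * r + 1)) (⋃ x ∈ V, range x)
  obtain ⟨hSfin, hScard⟩ := encard_le_coe_iff_finite_ncard_le.1
    (encard_gaifmanBall_biUnion_range_le hd _ hVfin : S.encard ≤ _)
  have : Finite S := hSfin
  -- `partialInv` keeps the entries of `p` lying in `S` and sends the others to `none`.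
  let key : (ι → M) → NbhdCode L ι (Nat.card ι * (d + 1) ^ r) × (ι → Option S) :=
    fun p => (code p, Function.partialInv ((↑) : S → M) ∘ p)
  have hkey : ∀ p p', key p = key p' → ∀ x ∈ V,
      code' (Sum.elim x p) = code' (Sum.elim x p') := fun p p' h x hx =>
    (hcode' _ _).2 <| ((hcode p p').1 (Prod.mk.inj h).1).sumElim_of_eq_near
      (fun i => eq_of_partialInv_val_eq (congrFun (Prod.mk.inj h).2 i))
      (subset_biUnion_of_mem (u := range) hx)
  have hcount := ncard_powerset_le_of_shattered (V := V) (fun p x => code' (Sum.elim x p)) key hkey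
    fun W hW => by
      obtain ⟨Q, p, hQ, hQW⟩ := hV W hW
      refine ⟨p, code' '' Q, fun x hx => Iff.trans ⟨?_, mem_image_of_mem code'⟩ (hQW x hx)⟩
      rintro ⟨a, ha, hax⟩
      exact hQ ((hcode' _ _).1 hax) ha
  rw [ncard_powerset V hVfin, Nat.card_prod, Nat.card_fun, Finite.card_option,
    Nat.card_coe_set_eq] at hcount
  exact hcount.trans (by gcongr)

theorem exists_mul_pow_lt_two_pow (K C ℓ : ℕ) : ∃ m : ℕ, K * (m * C + 1) ^ ℓ < 2 ^ m := by
  have hlim : Filter.Tendsto (fun n : ℕ => (n : ℝ) ^ ℓ / 2 ^ n) Filter.atTop (nhds 0) :=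
    tendsto_pow_const_div_const_pow_of_one_lt ℓ one_lt_two
  have hpos : (0 : ℝ) < 1 / (K * (C + 1) ^ ℓ + 1) := by positivity
  obtain ⟨m, hm, hm₁⟩ :=
    ((hlim.eventually_lt_const hpos).and (Filter.eventually_ge_atTop 1)).exists
  rw [div_lt_div_iff₀ (by positivity) (by positivity), one_mul] at hm
  refine ⟨m, ?_⟩
  calc K * (m * C + 1) ^ ℓ ≤ K * (m * (C + 1)) ^ ℓ := by gcongr; linarith
    _ = K * (C + 1) ^ ℓ * m ^ ℓ := by rw [mul_pow]; ring
    _ ≤ m ^ ℓ * (K * (C + 1) ^ ℓ + 1) := by rw [mul_comm]; gcongr; omega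
    _ < 2 ^ m := by exact_mod_cast hm

variable (L ι κ) in
theorem exists_encard_le_of_shattered_by_isGaifmanLocal (d r : ℕ) :
    ∃ m : ℕ, ∀ (M : Type w) [L.Structure M],
      (∀ a : M, {b | gaifmanAdj L M a b}.encard ≤ d) → ∀ V : Set (κ → M),
        (∀ W ⊆ V, ∃ (Q : Set (κ ⊕ ι → M)) (p : ι → M), IsGaifmanLocal L r Q ∧
          ∀ x ∈ V, Sum.elim x p ∈ Q ↔ x ∈ W) →
        V.encard ≤ m := by
  obtain ⟨m, hm⟩ := exists_mul_pow_lt_two_pow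
    (Nat.card (NbhdCode L ι (Nat.card ι * (d + 1) ^ r)) *
      2 ^ Nat.card (NbhdCode L (κ ⊕ ι) (Nat.card (κ ⊕ ι) * (d + 1) ^ r)))
    (Nat.card κ * (d + 1) ^ ((Nat.card ι + 1) * (2 * r + 1))) (Nat.card ι)
  refine ⟨m, fun M _ hd V hV => ?_⟩
  by_contra! hlt
  obtain ⟨V', hV'V, hV'⟩ := exists_subset_encard_eq hlt.le
  have hV'fin : V'.Finite := finite_of_encard_eq_coe hV'
  have hcount := two_pow_ncard_le_of_shattered_by_isGaifmanLocal hd hV'fin fun W hW => by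
    obtain ⟨Q, p, hQ, hQW⟩ := hV W (hW.trans hV'V)
    exact ⟨Q, p, hQ, fun x hx => hQW x (hV'V hx)⟩
  rw [ncard_def, hV', ENat.toNat_natCast, mul_right_comm] at hcount
  exact hm.not_ge hcount


end Counting

/-- Lemma 5.3, Grohe–Turán: for all `d, k, ℓ, q` there is an `m` such that for
every structure `B` of maximum Gaifman degree at most `d`, the family of concepts
`⟦φ(x̄; v̄)⟧^B ⊆ U(B)^k` (with `qr(φ) ≤ q`, `|x̄| = k`, `|ȳ| = ℓ`, `v̄ ∈ U(B)^ℓ`) has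
VC-dimension at most `m`: every set shattered by the family is finite of size at most `m`. -/
theorem statement_14 {L : FirstOrder.Language} [L.IsRelational] [Finite L.Symbols]
    (dg k ℓ q : ℕ) :
    ∃ m : ℕ, ∀ (B : Type w) [L.Structure B],
      (∀ a : B, {b | gaifmanAdj L B a b}.Finite ∧ Set.ncard {b | gaifmanAdj L B a b} ≤ dg) →
      ∀ V : Set (Fin k → B),
        (∀ W ⊆ V, ∃ (φ : L.Formula (Fin (k + ℓ))) (p : Fin ℓ → B), qRank φ ≤ q ∧
          ∀ x ∈ V, (φ.Realize (Fin.append x p) ↔ x ∈ W)) →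
        V.Finite ∧ V.ncard ≤ m := by
  have : Finite (Σ n, L.Relations n) :=
    .of_injective (Sum.inr : _ → L.Symbols) Sum.inr_injective
  obtain ⟨m, hm⟩ := exists_encard_le_of_shattered_by_isGaifmanLocal L (Fin ℓ) (Fin k) dg
    (localityRadius q)
  refine ⟨m, fun B _ hd V hV => ?_⟩
  simp only [← encard_le_coe_iff_finite_ncard_le] at hd ⊢
  refine hm B hd V fun W hW => ?_
  obtain ⟨φ, p, hφ, hφW⟩ := hV W hW
  have hlocal := isGaifmanLocal_setOf_realize (fun r _ => finite_gaifmanBall hd r) φ hφ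
  refine ⟨_, p, hlocal.preimage_comp finSumFinEquiv.symm, fun x hx => ?_⟩
  have happend : Sum.elim x p ∘ finSumFinEquiv.symm = Fin.append x p := by
    rw [Equiv.comp_symm_eq]
    exact Fin.append_comp_sumElim.symm
  rw [mem_preimage, happend]
  exact hφW x hx
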